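/- Let f be a standard solution family, set ω = e^{2πi/5}, α = e^{iπ/10}, ψ₊(z,λ) = f(α·z, −α^{−2}·λ) and ψ₋(z,λ) = f(−α^{−1}·z, −α²·λ). If λ ∈ ℂ is an eigenvalue of the imaginary cubic oscillator, then ψ₋(z,λ) = −ω·ψ₊(z,λ) for all z ∈ ℂ, and moreover f(ω·z, ω³·λ) + ω·f(ω^{−1}·z, ω^{−3}·λ) = 0 for all z ∈ ℂ (that is, the Stokes coefficient C(λ) vanishes). -/

import Mathlib

open Complex MeasureTheory

/-- `lam` is an eigenvalue of the imaginary cubic oscillator `H = p² + i x³`. -/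
def IsEigenvalueICO (lam : ℂ) : Prop :=
  ∃ ψ : ℝ → ℂ, ψ ≠ 0 ∧ ContDiff ℝ 2 ψ ∧
    Integrable (fun x : ℝ => ‖ψ x‖ ^ 2) ∧
    ∀ x : ℝ, -(deriv (deriv ψ) x) + Complex.I * (x : ℂ) ^ 3 * ψ x = lam * ψ x

/-- `f : ℂ × ℂ → ℂ` is a standard solution family for `f'' = (z³ + λ) f`:
for each `λ` the map `z ↦ f(z,λ)` is entire and solves the ODE, and it has the
Liouville–Green asymptotics `f(z,λ) = z^{-3/4} e^{-(2/5) z^{5/2}} (1 + O(z^{-1/2}))`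
as `z → ∞` in the sector `|arg z| ≤ 3π/5 - ε`, uniformly for `λ` in compact sets. -/
def IsStdSolutionFamily (f : ℂ → ℂ → ℂ) : Prop :=
  (∀ lam : ℂ, Differentiable ℂ (fun z => f z lam) ∧
    ∀ z : ℂ, deriv (deriv (fun w => f w lam)) z = (z ^ 3 + lam) * f z lam) ∧
  (∀ ε > (0 : ℝ), ∀ L : Set ℂ, IsCompact L →
    ∃ C > (0 : ℝ), ∃ R > (0 : ℝ), ∀ lam ∈ L, ∀ z : ℂ,
      R ≤ ‖z‖ → |Complex.arg z| ≤ 3 * Real.pi / 5 - ε →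
      ‖(f z lam * z ^ ((3 : ℂ) / 4) *
          Complex.exp ((2 / 5 : ℂ) * z ^ ((5 : ℂ) / 2)) - 1)‖
        ≤ C * ‖z‖ ^ (-(1 / 2) : ℝ))

/-!
If `ζ ^ 5 = 1`, then `z ↦ f (ζ * I * z) (ζ ^ 3 * λ)` solves the equation of the oscillator, and it
and its derivative stay bounded along the half-line on which `ζ * I * x` points into
`|arg| < π / 5`: the negative half-line for `ζ = ω`, the positive one for `ζ = ω⁻¹`. The Wronskian
`W` of such a solution `u` with a square-integrable eigenfunction `ψ` is constant, and it vanishes,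
since `(ψ u)' = 2 ψ u' - W` would otherwise force the square-integrable function `ψ u` to grow
linearly. Hence at an eigenvalue the solutions for `ζ = ω` and `ζ = ω⁻¹` are both proportional to
`ψ`, so to each other. The Liouville–Green asymptotics on the rays `arg = ± 2π / 5` identify the
constant of proportionality as `-ω`.
-/

open Asymptotics Bornology Filter Set Topology

section Schrodinger

/-- `u` solves the stationary Schrödinger equation `u'' = q u` on the line or plane `𝕜`. -/
structure IsSchrodingerSolution {𝕜 A : Type*} [NontriviallyNormedField 𝕜] [NormedRing A]
    [NormedAlgebra 𝕜 A] (q u : 𝕜 → A) : Prop where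
  differentiable : Differentiable 𝕜 u
  hasDerivAt_deriv : ∀ x, HasDerivAt (deriv u) (q x * u x) x

/-- The Wronskian `u v' - u' v` of two functions on `𝕜`. -/
noncomputable def wronskian {𝕜 A : Type*} [NontriviallyNormedField 𝕜] [NormedRing A]
    [NormedAlgebra 𝕜 A] (u v : 𝕜 → A) (x : 𝕜) : A :=
  u x * deriv v x - deriv u x * v x

namespace IsSchrodingerSolution

section Algebra

variable {𝕜 A : Type*} [NontriviallyNormedField 𝕜] [NormedRing A] [NormedAlgebra 𝕜 A]
  {q u : 𝕜 → A}

theorem hasDerivAt (hu : IsSchrodingerSolution q u) (x : 𝕜) : HasDerivAt u (deriv u x) x :=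
  (hu.differentiable x).hasDerivAt

theorem continuous_deriv (hu : IsSchrodingerSolution q u) : Continuous (deriv u) :=
  continuous_iff_continuousAt.2 fun x => (hu.hasDerivAt_deriv x).continuousAt

theorem comp_mul_left (hu : IsSchrodingerSolution q u) (c : 𝕜) :
    IsSchrodingerSolution (fun x => c ^ 2 • q (c * x)) (fun x => u (c * x)) where
  differentiable := hu.differentiable.comp (differentiable_id.const_mul c)
  hasDerivAt_deriv x := by
    have hderiv : deriv (fun x => u (c * x)) = fun x => c • deriv u (c * x) :=
      funext fun x => deriv_comp_mul_left c u x
    have hmul : HasDerivAt (fun x => c * x) c x := by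
      simpa using (hasDerivAt_id x).const_mul c
    rw [hderiv]
    refine (((hu.hasDerivAt_deriv (c * x)).scomp x hmul).const_smul c).congr_deriv ?_
    rw [smul_smul, smul_mul_assoc, sq]

theorem comp_neg (hu : IsSchrodingerSolution q u) :
    IsSchrodingerSolution (fun x => q (-x)) (fun x => u (-x)) := by
  simpa using hu.comp_mul_left (-1)

end Algebra

theorem comp_ofReal {q u : ℂ → ℂ} (hu : IsSchrodingerSolution q u) :
    IsSchrodingerSolution (fun x : ℝ => q x) (fun x : ℝ => u x) where
  differentiable x := (hu.hasDerivAt x).comp_ofReal.differentiableAt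
  hasDerivAt_deriv x := by
    have hderiv : deriv (fun x : ℝ => u x) = fun x : ℝ => deriv u x :=
      funext fun x => (hu.hasDerivAt x).comp_ofReal.deriv
    rw [hderiv]
    exact (hu.hasDerivAt_deriv x).comp_ofReal

theorem wronskian_eq {𝕜 A : Type*} [RCLike 𝕜] [NormedCommRing A] [NormedAlgebra 𝕜 A]
    {q u v : 𝕜 → A} (hu : IsSchrodingerSolution q u) (hv : IsSchrodingerSolution q v) (x y : 𝕜) :
    wronskian u v x = wronskian u v y := by
  have hW (x : 𝕜) : HasDerivAt (wronskian u v) 0 x := by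
    refine (((hu.hasDerivAt x).mul (hv.hasDerivAt_deriv x)).sub
      ((hu.hasDerivAt_deriv x).mul (hv.hasDerivAt x))).congr_deriv ?_
    ring
  exact is_const_of_deriv_eq_zero (fun x => (hW x).differentiableAt) (fun x => (hW x).deriv) x y

end IsSchrodingerSolution

theorem wronskian_comp_ofReal {u v : ℂ → ℂ} (hu : Differentiable ℂ u) (hv : Differentiable ℂ v)
    (x : ℝ) : wronskian (fun x : ℝ => u x) (fun x : ℝ => v x) x = wronskian u v x := by
  simp only [wronskian, (hu x).hasDerivAt.comp_ofReal.deriv, (hv x).hasDerivAt.comp_ofReal.deriv]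

theorem wronskian_comp_neg {𝕜 A : Type*} [NontriviallyNormedField 𝕜] [NormedRing A]
    [NormedAlgebra 𝕜 A] (u v : 𝕜 → A) (x : 𝕜) :
    wronskian (fun x => u (-x)) (fun x => v (-x)) x = -wronskian u v (-x) := by
  simp only [wronskian, deriv_comp_neg]
  noncomm_ring

theorem wronskian_eq_zero_of_common {𝕜 A : Type*} [NontriviallyNormedField 𝕜] [NormedCommRing A]
    [NoZeroDivisors A] [NormedAlgebra 𝕜 A] {w u v : 𝕜 → A} {x : 𝕜} (hw : w x ≠ 0)
    (hu : wronskian w u x = 0) (hv : wronskian w v x = 0) : wronskian u v x = 0 := by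
  have hmul : w x * wronskian u v x = 0 := by
    simp only [wronskian] at *
    linear_combination u x * hv - v x * hu
  exact (mul_eq_zero.1 hmul).resolve_left hw

theorem exists_eq_const_mul_of_wronskian_eq_zero {u v : ℂ → ℂ} (hu : Differentiable ℂ u)
    (hv : Differentiable ℂ v) (hW : ∀ z, wronskian u v z = 0) (hv0 : v ≠ 0) :
    ∃ c : ℂ, ∀ z, u z = c * v z := by
  obtain ⟨z₀, hz₀⟩ : ∃ z₀, v z₀ ≠ 0 := Function.ne_iff.1 hv0
  obtain ⟨δ, hδ, hball⟩ :=
    Metric.eventually_nhds_iff_ball.1 (hv.continuous.continuousAt.eventually_ne hz₀)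
  have hquot (z) (hz : z ∈ Metric.ball z₀ δ) : HasDerivAt (fun z => u z / v z) 0 z := by
    refine ((hu z).hasDerivAt.div (hv z).hasDerivAt (hball z hz)).congr_deriv ?_
    have hWz := hW z
    rw [wronskian] at hWz
    rw [show deriv u z * v z - u z * deriv v z = 0 by linear_combination -hWz, zero_div]
  have hlocal : ∀ z ∈ Metric.ball z₀ δ, u z = u z₀ / v z₀ * v z := fun z hz => by
    rw [← Metric.isOpen_ball.is_const_of_deriv_eq_zero (convex_ball z₀ δ).isPreconnected
      (fun z hz => (hquot z hz).differentiableAt.differentiableWithinAt)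
      (fun z hz => (hquot z hz).deriv) hz (Metric.mem_ball_self hδ), div_mul_cancel₀ _ (hball z hz)]
  have hu_an : AnalyticOnNhd ℂ u univ := fun z _ => hu.analyticAt z
  have hv_an : AnalyticOnNhd ℂ (fun z => u z₀ / v z₀ * v z) univ :=
    fun z _ => (hv.const_mul _).analyticAt z
  exact ⟨u z₀ / v z₀, congrFun (hu_an.eq_of_eventuallyEq hv_an
    (eventually_of_mem (Metric.ball_mem_nhds z₀ hδ) hlocal))⟩

end Schrodinger

section SquareIntegrable

variable {E : Type*} [NormedAddCommGroup E]

theorem not_integrableAtFilter_norm_sq_of_tendsto_norm_atTop {g : ℝ → E}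
    (hg : Tendsto (fun x => ‖g x‖) atTop atTop) :
    ¬ IntegrableAtFilter (fun x => ‖g x‖ ^ 2) atTop := fun hint => by
  have hone : (fun _ : ℝ => (1 : ℝ)) =O[atTop] fun x => ‖g x‖ ^ 2 := by
    refine .of_bound 1 ?_
    filter_upwards [hg.eventually_ge_atTop 1] with x hx
    simpa using hx
  have hvol : ∀ s ∈ (atTop : Filter ℝ), volume s = ⊤ := fun s hs => by
    obtain ⟨a, ha⟩ := mem_atTop_sets.1 hs
    exact top_unique (Real.volume_Ici (a := a) ▸ measure_mono ha)
  exact one_ne_zero ((hone.integrableAtFilter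
    stronglyMeasurable_const.stronglyMeasurableAtFilter hint).eq_zero_of_tendsto hvol
    tendsto_const_nhds)

variable [NormedSpace ℝ E]

theorem norm_sub_le_of_integrableOn_norm_deriv_sq {G : ℝ → E} (hG : Differentiable ℝ G) {a x ε : ℝ}
    (hax : a ≤ x) (hε : 0 < ε) (hint : IntegrableOn (fun t => ‖deriv G t‖ ^ 2) (Ici a)) :
    ‖G x - G a‖ ≤ ε * (x - a) + ε⁻¹ * ∫ t in Ici a, ‖deriv G t‖ ^ 2 := by
  have hint' : IntervalIntegrable (fun t => ‖deriv G t‖ ^ 2) volume a x :=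
    (intervalIntegrable_iff_integrableOn_Icc_of_le hax).2 (hint.mono_set Icc_subset_Ici_self)
  have hyoung (p : ℝ) : p ≤ ε + ε⁻¹ * p ^ 2 := by
    rw [← sub_nonneg]
    have : ε + ε⁻¹ * p ^ 2 - p = ((ε - p / 2) ^ 2 + 3 / 4 * p ^ 2) / ε := by
      field_simp
      ring
    rw [this]
    positivity
  calc ‖G x - G a‖ ≤ ∫ t in a..x, (ε + ε⁻¹ * ‖deriv G t‖ ^ 2) :=
        norm_sub_le_integral_of_norm_deriv_le_of_le hax hG.continuous.continuousOn
          hG.differentiableOn (.of_forall fun t _ => hyoung _)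
          (intervalIntegrable_const.add (hint'.const_mul _))
    _ = ε * (x - a) + ε⁻¹ * ∫ t in a..x, ‖deriv G t‖ ^ 2 := by
        rw [intervalIntegral.integral_add intervalIntegrable_const (hint'.const_mul _),
          intervalIntegral.integral_const, intervalIntegral.integral_const_mul, smul_eq_mul,
          mul_comm ε]
    _ ≤ ε * (x - a) + ε⁻¹ * ∫ t in Ici a, ‖deriv G t‖ ^ 2 := by
        rw [intervalIntegral.integral_of_le hax]
        gcongr
        · exact .of_forall fun t => by positivity
        · exact Ioc_subset_Icc_self.trans Icc_subset_Ici_self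

theorem tendsto_norm_atTop_of_integrableAtFilter_norm_deriv_sub_sq {g : ℝ → E} {w : E}
    (hg : Differentiable ℝ g) (hw : w ≠ 0)
    (hint : IntegrableAtFilter (fun x => ‖deriv g x - w‖ ^ 2) atTop) :
    Tendsto (fun x => ‖g x‖) atTop atTop := by
  obtain ⟨a, ha⟩ := integrableAtFilter_atTop_iff.1 hint
  set G : ℝ → E := g - fun x => x • w with hGdef
  have hG (x : ℝ) : HasDerivAt G (deriv g x - w) x := by
    simpa only [one_smul] using (hg x).hasDerivAt.sub ((hasDerivAt_id' x).smul_const w)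
  have hderiv : deriv G = fun x => deriv g x - w := funext fun x => (hG x).deriv
  set B : ℝ := (‖w‖ / 2)⁻¹ * ∫ t in Ici a, ‖deriv g t - w‖ ^ 2
  have hw' : 0 < ‖w‖ / 2 := half_pos (norm_pos_iff.2 hw)
  have hlower : ∀ x ≥ a, ‖w‖ / 2 * (x - a) - B - ‖g a‖ ≤ ‖g x‖ := fun x hx => by
    have hdist : ‖G x - G a‖ ≤ ‖w‖ / 2 * (x - a) + B := by
      simpa only [hderiv] using norm_sub_le_of_integrableOn_norm_deriv_sq
        (fun x => (hG x).differentiableAt) hx hw' (by simpa only [hderiv] using ha)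
    have hlin : (x - a) * ‖w‖ ≤ ‖g x‖ + ‖g a‖ + ‖G x - G a‖ :=
      calc (x - a) * ‖w‖ = ‖g x - g a - (G x - G a)‖ := by
            have hsub : g x - g a - (G x - G a) = (x - a) • w := by
              simp only [hGdef, Pi.sub_apply]
              module
            rw [hsub, norm_smul, Real.norm_of_nonneg (sub_nonneg.2 hx)]
        _ ≤ ‖g x‖ + ‖g a‖ + ‖G x - G a‖ :=
            (norm_sub_le _ _).trans (by gcongr; exact norm_sub_le _ _)
    linarith
  refine tendsto_atTop_mono' _ (eventually_atTop.2 ⟨a, hlower⟩) ?_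
  simp only [sub_sub _ B]
  exact tendsto_atTop_add_const_right _ _
    ((tendsto_atTop_add_const_right _ _ tendsto_id).const_mul_atTop hw')

end SquareIntegrable

namespace IsSchrodingerSolution

variable {A : Type*} [NormedCommRing A] [NormedAlgebra ℝ A] {q ψ u : ℝ → A}

theorem wronskian_eq_zero_of_isBigO_atTop (hψ : IsSchrodingerSolution q ψ)
    (hu : IsSchrodingerSolution q u) (hint : IntegrableAtFilter (fun x => ‖ψ x‖ ^ 2) atTop)
    (hu_bdd : u =O[atTop] (1 : ℝ → ℝ)) (hu'_bdd : deriv u =O[atTop] (1 : ℝ → ℝ)) (x : ℝ) :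
    wronskian ψ u x = 0 := by
  have hint_mul {v : ℝ → A} (hv : Continuous v) (hv_bdd : v =O[atTop] (1 : ℝ → ℝ)) :
      IntegrableAtFilter (fun x => ‖ψ x * v x‖ ^ 2) atTop := by
    have hbig : (fun x => ‖ψ x * v x‖ ^ 2) =O[atTop] fun x => ‖ψ x‖ ^ 2 := by
      simpa using ((isBigO_refl ψ atTop).norm_right.mul hv_bdd).norm_left.pow 2
    have hcont : Continuous fun x => ‖ψ x * v x‖ ^ 2 :=
      ((hψ.differentiable.continuous.mul hv).norm).pow 2
    exact hbig.integrableAtFilter hcont.stronglyMeasurable.stronglyMeasurableAtFilter hint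
  have hprod (y : ℝ) :
      deriv (ψ * u) y - -wronskian ψ u x = ψ y * (2 * deriv u y) := by
    rw [((hψ.hasDerivAt y).mul (hu.hasDerivAt y)).deriv, hψ.wronskian_eq hu x y, wronskian]
    ring
  by_contra hW
  refine not_integrableAtFilter_norm_sq_of_tendsto_norm_atTop
    (tendsto_norm_atTop_of_integrableAtFilter_norm_deriv_sub_sq
      (hψ.differentiable.mul hu.differentiable) (neg_ne_zero.2 hW) ?_)
    (hint_mul hu.differentiable.continuous hu_bdd)
  simpa only [hprod] using hint_mul (v := fun y => 2 * deriv u y)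
    (continuous_const.mul hu.continuous_deriv) (hu'_bdd.const_mul_left 2)

theorem wronskian_eq_zero_of_isBigO_atBot (hψ : IsSchrodingerSolution q ψ)
    (hu : IsSchrodingerSolution q u) (hint : IntegrableAtFilter (fun x => ‖ψ x‖ ^ 2) atBot)
    (hu_bdd : u =O[atBot] (1 : ℝ → ℝ)) (hu'_bdd : deriv u =O[atBot] (1 : ℝ → ℝ)) (x : ℝ) :
    wronskian ψ u x = 0 := by
  have hint_neg : IntegrableAtFilter (fun x => ‖ψ (-x)‖ ^ 2) atTop := by
    obtain ⟨a, ha⟩ := integrableAtFilter_atBot_iff.1 hint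
    rw [← neg_neg a] at ha
    exact integrableAtFilter_atTop_iff.2 ⟨-a, ha.comp_neg_Ici⟩
  have hderiv : deriv (fun x => u (-x)) = fun x => -deriv u (-x) :=
    funext fun x => deriv_comp_neg u x
  have hW := hψ.comp_neg.wronskian_eq_zero_of_isBigO_atTop hu.comp_neg hint_neg
    (hu_bdd.comp_tendsto tendsto_neg_atTop_atBot)
    (by rw [hderiv]; exact (hu'_bdd.comp_tendsto tendsto_neg_atTop_atBot).neg_left) (-x)
  simpa [wronskian_comp_neg] using hW

end IsSchrodingerSolution

section Sector

/-- Neighbourhoods of infinity in the closed sector `|arg z| ≤ δ`. -/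
noncomputable def sectorAtInfty (δ : ℝ) : Filter ℂ :=
  cobounded ℂ ⊓ 𝓟 {z | |arg z| ≤ δ}

variable {δ : ℝ} {β : ℂ}

theorem tendsto_ofReal_mul_sectorAtInfty (hβ : β ∈ slitPlane) (hδ : |arg β| < δ) :
    Tendsto (fun p : ℝ × ℂ => (p.1 : ℂ) * p.2) (atTop ×ˢ 𝓝 β) (sectorAtInfty δ) := by
  refine tendsto_inf.2 ⟨tendsto_norm_atTop_iff_cobounded.1 ?_, tendsto_principal.2 ?_⟩
  · simp only [norm_mul, norm_real]
    exact (tendsto_norm_atTop_atTop.comp tendsto_fst).atTop_mul_pos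
      (norm_pos_iff.2 (slitPlane_ne_zero hβ)) tendsto_snd.norm
  · have harg : ∀ᶠ v in 𝓝 β, |arg v| < δ := (continuousAt_arg hβ).abs.eventually_lt_const hδ
    filter_upwards [(eventually_gt_atTop 0).prod_mk harg] with p hp
    exact (arg_real_mul p.2 hp.1).symm ▸ hp.2.le

theorem isBigO_comp_ray (hβ : β ∈ slitPlane) (hδ : |arg β| < δ) {y : ℂ → ℂ}
    (hy : y =O[sectorAtInfty δ] (1 : ℂ → ℝ)) :
    (fun x : ℝ => y (β * x)) =O[atTop] (1 : ℝ → ℝ) := by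
  simp only [mul_comm β]
  exact hy.comp_tendsto ((tendsto_ofReal_mul_sectorAtInfty hβ hδ).comp
    (tendsto_id.prodMk tendsto_const_nhds))

/- By Cauchy's estimate for `v ↦ y (x v)` on a disc about `β` whose radius is independent of `x`. -/
theorem isBigO_deriv_comp_ray (hβ : β ∈ slitPlane) (hδ : |arg β| < δ) {y : ℂ → ℂ}
    (hy_diff : Differentiable ℂ y) (hy : y =O[sectorAtInfty δ] (1 : ℂ → ℝ)) :
    (deriv fun x : ℝ => y (β * x)) =O[atTop] (1 : ℝ → ℝ) := by
  obtain ⟨C, hC⟩ := (hy.comp_tendsto (tendsto_ofReal_mul_sectorAtInfty hβ hδ)).bound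
  obtain ⟨s, hs, t, ht, hst⟩ := mem_prod_iff.1 hC
  obtain ⟨r, hr, hball⟩ := Metric.nhds_basis_closedBall.mem_iff.1 ht
  refine .of_bound (‖β‖ * (C / r)) ?_
  filter_upwards [hs, eventually_ge_atTop 1] with x hxs hx
  have hcauchy : ‖deriv (fun v => y (x * v)) β‖ ≤ C / r :=
    norm_deriv_le_of_forall_mem_sphere_norm_le hr
      (hy_diff.comp (differentiable_id.const_mul _)).diffContOnCl fun v hv => by
        simpa using hst (mk_mem_prod hxs (hball (Metric.sphere_subset_closedBall hv)))
  rw [deriv_comp_mul_left, norm_smul, norm_real, Real.norm_of_nonneg (by linarith)] at hcauchy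
  have hray : deriv (fun x : ℝ => y (β * x)) x = β * deriv y (β * x) := by
    rw [← smul_eq_mul, ← deriv_comp_mul_left]
    exact ((hy_diff.comp (differentiable_id.const_mul β)) (x : ℂ)).hasDerivAt.comp_ofReal.deriv
  rw [hray, norm_mul, mul_comm β, Pi.one_apply, norm_one, mul_one]
  gcongr
  exact (le_mul_of_one_le_left (norm_nonneg _) hx).trans hcauchy

theorem arg_exp_ofReal_mul_I {θ : ℝ} (hθ : |θ| < Real.pi) : arg (exp (θ * I)) = θ := by
  rw [exp_mul_I, arg_cos_add_sin_mul_I ⟨(abs_lt.1 hθ).1, (abs_lt.1 hθ).2.le⟩]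

theorem exp_ofReal_mul_I_mem_slitPlane {θ : ℝ} (hθ : |θ| < Real.pi) :
    exp (θ * I) ∈ slitPlane := by
  rw [mem_slitPlane_iff_arg, arg_exp_ofReal_mul_I hθ]
  exact ⟨(abs_lt.1 hθ).2.ne, exp_ne_zero _⟩

theorem ofReal_mul_exp_cpow {r θ : ℝ} (hr : 0 < r) (hθ : |θ| < Real.pi) (s : ℂ) :
    (r * exp (θ * I)) ^ s = (r : ℂ) ^ s * exp (s * θ * I) := by
  have hr' : (r : ℂ) ≠ 0 := ofReal_ne_zero.2 hr.ne'
  have hθ' := abs_lt.1 hθ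
  rw [cpow_def_of_ne_zero (mul_ne_zero hr' (exp_ne_zero _)), log_ofReal_mul hr (exp_ne_zero _),
    log_exp (by simpa using hθ'.1) (by simpa using hθ'.2.le), ofReal_log hr.le,
    cpow_def_of_ne_zero hr', ← exp_add]
  ring_nf

end Sector

namespace IsStdSolutionFamily

variable {f : ℂ → ℂ → ℂ}

theorem isSchrodingerSolution (hf : IsStdSolutionFamily f) (μ : ℂ) :
    IsSchrodingerSolution (fun z => z ^ 3 + μ) (fun z => f z μ) where
  differentiable := (hf.1 μ).1
  hasDerivAt_deriv z := by
    rw [← (hf.1 μ).2 z]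
    exact ((hf.1 μ).1.analyticAt z).deriv.differentiableAt.hasDerivAt

theorem isSchrodingerSolution_rotate (hf : IsStdSolutionFamily f) {ζ : ℂ} (hζ : ζ ^ 5 = 1)
    (lam : ℂ) :
    IsSchrodingerSolution (fun z => I * z ^ 3 - lam) (fun z => f (ζ * I * z) (ζ ^ 3 * lam)) := by
  convert (hf.isSchrodingerSolution (ζ ^ 3 * lam)).comp_mul_left (ζ * I) using 2 with z
  rw [smul_eq_mul]
  linear_combination (-I * z ^ 3 + lam) * hζ -
    (ζ ^ 5 * I * z ^ 3 * (I ^ 2 - 1) + ζ ^ 5 * lam) * I_sq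

theorem tendsto_sectorAtInfty (hf : IsStdSolutionFamily f) (μ : ℂ) {δ : ℝ}
    (hδ : δ < 3 * Real.pi / 5) :
    Tendsto (fun z => f z μ * z ^ (3 / 4 : ℂ) * exp (2 / 5 * z ^ (5 / 2 : ℂ)))
      (sectorAtInfty δ) (𝓝 1) := by
  obtain ⟨C, -, R, -, hCR⟩ := hf.2 _ (sub_pos.2 hδ) {μ} isCompact_singleton
  have hnorm : Tendsto (fun z : ℂ => ‖z‖) (sectorAtInfty δ) atTop :=
    tendsto_norm_cobounded_atTop.mono_left inf_le_left
  have herror : Tendsto (fun z : ℂ => C * ‖z‖ ^ (-(1 / 2) : ℝ)) (sectorAtInfty δ) (𝓝 0) := by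
    simpa using ((tendsto_rpow_neg_atTop (by norm_num)).comp hnorm).const_mul C
  rw [tendsto_iff_norm_sub_tendsto_zero]
  refine squeeze_zero' (.of_forall fun _ => norm_nonneg _) ?_ herror
  filter_upwards [hnorm.eventually_ge_atTop R, mem_inf_of_right (mem_principal_self _)]
    with z hz harg
  exact hCR μ rfl z hz (by linarith [show |arg z| ≤ δ from harg])

/- For `|arg z| ≤ π/5` we have `Re z^{5/2} ≥ 0`, so both normalising factors have modulus at
least `1`. -/
theorem isBigO_one_sectorAtInfty (hf : IsStdSolutionFamily f) (μ : ℂ) :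
    (fun z => f z μ) =O[sectorAtInfty (Real.pi / 5)] (1 : ℂ → ℝ) := by
  refine IsBigO.trans (.of_bound 1 ?_)
    ((hf.tendsto_sectorAtInfty μ (by linarith [Real.pi_pos])).isBigO_one ℝ)
  have hsector : ∀ᶠ z in sectorAtInfty (Real.pi / 5), 1 ≤ ‖z‖ ∧ |arg z| ≤ Real.pi / 5 :=
    ((tendsto_norm_cobounded_atTop.eventually_ge_atTop 1).filter_mono inf_le_left).and
      (mem_inf_of_right (mem_principal_self _))
  filter_upwards [hsector] with z ⟨hz, harg⟩
  have hpow : 1 ≤ ‖z ^ (3 / 4 : ℂ)‖ := by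
    rw [show (3 / 4 : ℂ) = ((3 / 4 : ℝ) : ℂ) by push_cast; rfl, norm_cpow_real]
    exact Real.one_le_rpow hz (by norm_num)
  have hexp : 1 ≤ ‖exp (2 / 5 * z ^ (5 / 2 : ℂ))‖ := by
    have hcos : 0 ≤ Real.cos (arg z * (5 / 2)) := by
      obtain ⟨hlo, hhi⟩ := abs_le.1 harg
      exact Real.cos_nonneg_of_neg_pi_div_two_le_of_le (by linarith) (by linarith)
    rw [norm_exp, Real.one_le_exp_iff, show (2 / 5 : ℂ) = ((2 / 5 : ℝ) : ℂ) by push_cast; rfl,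
      re_ofReal_mul, show (5 / 2 : ℂ) = ((5 / 2 : ℝ) : ℂ) by push_cast; rfl, cpow_ofReal_re]
    positivity
  rw [one_mul, norm_mul, norm_mul]
  exact (le_mul_of_one_le_right (norm_nonneg _) hpow).trans
    (le_mul_of_one_le_right (by positivity) hexp)

theorem tendsto_ray (hf : IsStdSolutionFamily f) (μ : ℂ) {θ : ℝ} (hθ : |θ| < 3 * Real.pi / 5) :
    Tendsto (fun r : ℝ => f (r * exp (θ * I)) μ * ((r : ℂ) ^ (3 / 4 : ℂ) * exp (3 / 4 * θ * I)) *
      exp (2 / 5 * ((r : ℂ) ^ (5 / 2 : ℂ) * exp (5 / 2 * θ * I)))) atTop (𝓝 1) := by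
  have hθ' : |θ| < Real.pi := by linarith [Real.pi_pos]
  obtain ⟨δ, hθδ, hδ⟩ := exists_between hθ
  have hray : Tendsto (fun r : ℝ => (r : ℂ) * exp (θ * I)) atTop (sectorAtInfty δ) :=
    (tendsto_ofReal_mul_sectorAtInfty (exp_ofReal_mul_I_mem_slitPlane hθ')
      (by rwa [arg_exp_ofReal_mul_I hθ'])).comp (tendsto_id.prodMk tendsto_const_nhds)
  refine ((hf.tendsto_sectorAtInfty μ hδ).comp hray).congr' ?_
  filter_upwards [eventually_gt_atTop 0] with r hr
  simp only [Function.comp_apply, ofReal_mul_exp_cpow hr hθ']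

theorem comp_mul_left_ne_zero (hf : IsStdSolutionFamily f) (μ : ℂ) {β : ℂ} (hβ : β ≠ 0) :
    (fun z => f (β * z) μ) ≠ 0 := fun h => by
  have hzero (z : ℂ) : f z μ = 0 := by
    simpa only [mul_inv_cancel_left₀ hβ, Pi.zero_apply] using congrFun h (β⁻¹ * z)
  have hlim := hf.tendsto_ray μ (θ := 0) (by rw [abs_zero]; positivity)
  simp only [hzero, zero_mul] at hlim
  exact zero_ne_one (tendsto_nhds_unique tendsto_const_nhds hlim)

end IsStdSolutionFamily

theorem IsEigenvalueICO.exists_isSchrodingerSolution {lam : ℂ} (hlam : IsEigenvalueICO lam) :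
    ∃ ψ : ℝ → ℂ, ψ ≠ 0 ∧ Integrable (fun x => ‖ψ x‖ ^ 2) ∧
      IsSchrodingerSolution (fun x : ℝ => I * (x : ℂ) ^ 3 - lam) ψ := by
  obtain ⟨ψ, hψ0, hψ, hint, hode⟩ := hlam
  refine ⟨ψ, hψ0, hint, hψ.differentiable (by norm_num), fun x => ?_⟩
  have hderiv : ContDiff ℝ 1 (deriv ψ) :=
    (contDiff_succ_iff_deriv.1 (show ContDiff ℝ (1 + 1) ψ by rwa [one_add_one_eq_two])).2.2
  refine (hderiv.differentiable (by norm_num) x).hasDerivAt.congr_deriv ?_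
  linear_combination -hode x

namespace IsStdSolutionFamily

variable {f : ℂ → ℂ → ℂ} {lam ζ : ℂ} {ψ : ℝ → ℂ}

theorem wronskian_rotate_eq_zero_of_atTop (hf : IsStdSolutionFamily f) (hζ : ζ ^ 5 = 1) {θ : ℝ}
    (hζθ : ζ * I = exp (θ * I)) (hθ : |θ| < Real.pi / 5)
    (hψ : IsSchrodingerSolution (fun x : ℝ => I * (x : ℂ) ^ 3 - lam) ψ)
    (hint : IntegrableAtFilter (fun x => ‖ψ x‖ ^ 2) atTop) (x : ℝ) :
    wronskian ψ (fun x : ℝ => f (ζ * I * x) (ζ ^ 3 * lam)) x = 0 := by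
  have hθ' : |θ| < Real.pi := by linarith [Real.pi_pos]
  have hslit : ζ * I ∈ slitPlane := hζθ ▸ exp_ofReal_mul_I_mem_slitPlane hθ'
  have harg : |arg (ζ * I)| < Real.pi / 5 := by rwa [hζθ, arg_exp_ofReal_mul_I hθ']
  have hbdd := hf.isBigO_one_sectorAtInfty (ζ ^ 3 * lam)
  exact hψ.wronskian_eq_zero_of_isBigO_atTop (hf.isSchrodingerSolution_rotate hζ lam).comp_ofReal
    hint (isBigO_comp_ray hslit harg hbdd) (isBigO_deriv_comp_ray hslit harg (hf.1 _).1 hbdd) x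

theorem wronskian_rotate_eq_zero_of_atBot (hf : IsStdSolutionFamily f) (hζ : ζ ^ 5 = 1) {θ : ℝ}
    (hζθ : -(ζ * I) = exp (θ * I)) (hθ : |θ| < Real.pi / 5)
    (hψ : IsSchrodingerSolution (fun x : ℝ => I * (x : ℂ) ^ 3 - lam) ψ)
    (hint : IntegrableAtFilter (fun x => ‖ψ x‖ ^ 2) atBot) (x : ℝ) :
    wronskian ψ (fun x : ℝ => f (ζ * I * x) (ζ ^ 3 * lam)) x = 0 := by
  have hθ' : |θ| < Real.pi := by linarith [Real.pi_pos]
  have hslit : -(ζ * I) ∈ slitPlane := hζθ ▸ exp_ofReal_mul_I_mem_slitPlane hθ'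
  have harg : |arg (-(ζ * I))| < Real.pi / 5 := by rwa [hζθ, arg_exp_ofReal_mul_I hθ']
  have hbdd := hf.isBigO_one_sectorAtInfty (ζ ^ 3 * lam)
  set v : ℝ → ℂ := fun x => f (-(ζ * I) * x) (ζ ^ 3 * lam) with hv
  have hreflect : (fun x : ℝ => f (ζ * I * x) (ζ ^ 3 * lam)) = fun x => v (-x) := by
    simp only [hv, ofReal_neg, neg_mul_neg]
  have hderiv : deriv (fun x => v (-x)) = fun x => -deriv v (-x) :=
    funext fun x => deriv_comp_neg v x
  have hsol := (hf.isSchrodingerSolution_rotate hζ lam).comp_ofReal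
  rw [hreflect] at hsol ⊢
  refine hψ.wronskian_eq_zero_of_isBigO_atBot hsol hint
    ((isBigO_comp_ray hslit harg hbdd).comp_tendsto tendsto_neg_atBot_atTop) ?_ x
  rw [hderiv]
  exact ((isBigO_deriv_comp_ray hslit harg (hf.1 _).1 hbdd).comp_tendsto
    tendsto_neg_atBot_atTop).neg_left

end IsStdSolutionFamily

section FifthRoot

variable {ω : ℂ} (hω : ω = exp (2 * Real.pi * I / 5))
include hω

theorem fifthRoot_pow_five : ω ^ 5 = 1 := by
  simpa only [hω, Nat.cast_ofNat] using (isPrimitiveRoot_exp 5 (by norm_num)).pow_eq_one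

theorem fifthRoot_inv_mul_I : ω⁻¹ * I = exp ((Real.pi / 10 : ℝ) * I) := by
  have hsplit : ((Real.pi / 10 : ℝ) : ℂ) * I = -(2 * Real.pi * I / 5) + Real.pi / 2 * I := by
    push_cast
    ring
  rw [hsplit, exp_add, exp_neg, exp_pi_div_two_mul_I, ← hω]

theorem neg_fifthRoot_mul_I : -(ω * I) = exp ((-(Real.pi / 10) : ℝ) * I) := by
  have hinv : -(ω * I) = (ω⁻¹ * I)⁻¹ := by rw [mul_inv, inv_inv, inv_I, mul_neg]
  rw [hinv, fifthRoot_inv_mul_I hω, ← exp_neg, ofReal_neg, neg_mul]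

variable {f : ℂ → ℂ → ℂ}

namespace IsStdSolutionFamily

/- On the rays `arg z = ±2π/5` the factors `z^{5/2}` agree, so the ratio of the two asymptotics is
a pure phase. -/
theorem eq_neg_fifthRoot_of_eq_const_mul (hf : IsStdSolutionFamily f) {μ ν c : ℂ}
    (h : ∀ z, f (ω * z) μ = c * f (ω⁻¹ * z) ν) : c = -ω := by
  have hpi := Real.pi_pos
  have hexp : exp ((2 * Real.pi / 5 : ℝ) * I) = ω := by
    rw [hω]
    push_cast
    ring_nf
  have hexp_inv : exp ((-(2 * Real.pi / 5) : ℝ) * I) = ω⁻¹ := by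
    rw [← hexp, ← exp_neg, ofReal_neg, neg_mul]
  have hhalf : exp (5 / 2 * (2 * Real.pi / 5 : ℝ) * I) = -1 := by
    rw [← exp_pi_mul_I]
    push_cast
    ring_nf
  have hhalf_neg : exp (5 / 2 * (-(2 * Real.pi / 5) : ℝ) * I) = -1 := by
    rw [ofReal_neg, mul_neg, neg_mul, exp_neg, hhalf, inv_neg, inv_one]
  have hphase : exp (3 / 4 * (2 * Real.pi / 5 : ℝ) * I) =
      -ω⁻¹ * exp (3 / 4 * (-(2 * Real.pi / 5) : ℝ) * I) := by
    rw [← neg_one_mul ω⁻¹, ← exp_pi_mul_I, ← hexp_inv, ← exp_add, ← exp_add]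
    push_cast
    ring_nf
  have hlim := hf.tendsto_ray μ (θ := 2 * Real.pi / 5) (by rw [abs_of_pos] <;> linarith)
  have hlim_neg := hf.tendsto_ray ν (θ := -(2 * Real.pi / 5))
    (by rw [abs_neg, abs_of_pos] <;> linarith)
  simp only [hexp, hhalf, hphase, mul_comm _ ω, h] at hlim
  simp only [hexp_inv, hhalf_neg, mul_comm _ ω⁻¹] at hlim_neg
  have hc : c * -ω⁻¹ = 1 := tendsto_nhds_unique
    (by simpa only [mul_one] using hlim_neg.const_mul (c * -ω⁻¹)) (hlim.congr fun r => by ring)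
  have hω0 : ω ≠ 0 := hω ▸ exp_ne_zero _
  linear_combination -ω * hc - c * mul_inv_cancel₀ hω0

theorem rotate_eq_of_isEigenvalueICO (hf : IsStdSolutionFamily f) {lam : ℂ}
    (hlam : IsEigenvalueICO lam) (z : ℂ) :
    f (ω * z) (ω ^ 3 * lam) = -ω * f (ω⁻¹ * z) (ω⁻¹ ^ 3 * lam) := by
  obtain ⟨ψ, hψ0, hint, hψ⟩ := hlam.exists_isSchrodingerSolution
  obtain ⟨x₀, hx₀⟩ := Function.ne_iff.1 hψ0
  have hω5 := fifthRoot_pow_five hω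
  have hω5_inv : ω⁻¹ ^ 5 = 1 := by rw [inv_pow, hω5, inv_one]
  have hθ : |Real.pi / 10| < Real.pi / 5 := by
    rw [abs_of_pos] <;> linarith [Real.pi_pos]
  set U : ℂ → ℂ := fun z => f (ω * I * z) (ω ^ 3 * lam)
  set V : ℂ → ℂ := fun z => f (ω⁻¹ * I * z) (ω⁻¹ ^ 3 * lam)
  have hU : IsSchrodingerSolution (fun z => I * z ^ 3 - lam) U :=
    hf.isSchrodingerSolution_rotate hω5 lam
  have hV : IsSchrodingerSolution (fun z => I * z ^ 3 - lam) V :=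
    hf.isSchrodingerSolution_rotate hω5_inv lam
  have hWU : wronskian ψ (fun x : ℝ => U x) x₀ = 0 :=
    hf.wronskian_rotate_eq_zero_of_atBot hω5 (neg_fifthRoot_mul_I hω) (by rwa [abs_neg]) hψ
      (hint.integrableAtFilter _) x₀
  have hWV : wronskian ψ (fun x : ℝ => V x) x₀ = 0 :=
    hf.wronskian_rotate_eq_zero_of_atTop hω5_inv (fifthRoot_inv_mul_I hω) hθ hψ
      (hint.integrableAtFilter _) x₀
  have hW : wronskian U V x₀ = 0 := by
    rw [← wronskian_comp_ofReal hU.differentiable hV.differentiable]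
    exact wronskian_eq_zero_of_common hx₀ hWU hWV
  have hV0 : V ≠ 0 :=
    hf.comp_mul_left_ne_zero _ (fifthRoot_inv_mul_I hω ▸ exp_ne_zero _)
  obtain ⟨c, hc⟩ := exists_eq_const_mul_of_wronskian_eq_zero hU.differentiable hV.differentiable
    (fun z => (hU.wronskian_eq hV z x₀).trans hW) hV0
  have hrotate (z : ℂ) : f (ω * z) (ω ^ 3 * lam) = c * f (ω⁻¹ * z) (ω⁻¹ ^ 3 * lam) := by
    have harg (η : ℂ) : η * I * (-I * z) = η * z := by linear_combination -η * z * I_sq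
    simpa only [U, V, harg] using hc (-I * z)
  rw [hrotate, hf.eq_neg_fifthRoot_of_eq_const_mul hω hrotate]

end IsStdSolutionFamily

end FifthRoot

/-- If `λ` is an eigenvalue then `ψ₋ = -ω ψ₊` and the Stokes coefficient vanishes:
`f₋(z,λ) + ω f₊(z,λ) = 0`. -/
theorem eigenvalue_stokes_vanishes (f : ℂ → ℂ → ℂ) (hf : IsStdSolutionFamily f)
    (ω : ℂ) (hω : ω = Complex.exp (2 * Real.pi * Complex.I / 5))
    (α : ℂ) (hα : α = Complex.exp (Real.pi * Complex.I / 10))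
    (ψp ψm : ℂ → ℂ → ℂ)
    (hψp : ψp = fun z lam => f (α * z) (-(α ^ 2)⁻¹ * lam))
    (hψm : ψm = fun z lam => f (-α⁻¹ * z) (-α ^ 2 * lam))
    (lam : ℂ) (hlam : IsEigenvalueICO lam) :
    (∀ z : ℂ, ψm z lam = -ω * ψp z lam) ∧
    (∀ z : ℂ, f (ω * z) (ω ^ 3 * lam) + ω * f (ω⁻¹ * z) ((ω⁻¹) ^ 3 * lam) = 0) := by
  have hω0 : ω ≠ 0 := hω ▸ exp_ne_zero _
  have hω5 := fifthRoot_pow_five hω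
  have hαω : α = ω⁻¹ * I := by
    rw [fifthRoot_inv_mul_I hω, hα]
    push_cast
    ring_nf
  have hα_inv : -α⁻¹ = ω * I := by rw [hαω, mul_inv, inv_inv, inv_I, mul_neg, neg_neg]
  have hα_sq : -α ^ 2 = ω ^ 3 := by
    rw [hαω, mul_pow, I_sq]
    field_simp
    linear_combination -hω5
  have hα_sq_inv : -(α ^ 2)⁻¹ = ω⁻¹ ^ 3 := by rw [← inv_neg, hα_sq, inv_pow]
  have hrotate := hf.rotate_eq_of_isEigenvalueICO hω hlam
  refine ⟨fun z => ?_, fun z => by rw [hrotate z]; ring⟩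
  simp only [hψm, hψp, hα_inv, hα_sq, hα_sq_inv]
  simpa only [hαω, mul_assoc] using hrotate (I * z)
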